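/- Let G be a finite group, E a Riesz space with sufficiently many projections, and ρ : G → Aut⁺(E) a positive representation. Then ρ is projection band irreducible if and only if ρ is band irreducible (and either is equivalent to ρ being order indecomposable). -/

import Mathlib

/-- A (Riesz) ideal of an ordered real vector space: a submodule `I` such that
`|x| ≤ |y|` and `y ∈ I` imply `x ∈ I`. -/
def IsRieszIdeal {E : Type*} [AddCommGroup E] [Lattice E] [Module ℝ E]
    (I : Submodule ℝ E) : Prop :=
  ∀ x y : E, |x| ≤ |y| → y ∈ I → x ∈ I

/-- A band: an ideal closed under suprema of its subsets (when they exist in `E`). -/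
def IsBand {E : Type*} [AddCommGroup E] [Lattice E] [Module ℝ E]
    (B : Submodule ℝ E) : Prop :=
  IsRieszIdeal B ∧ ∀ (D : Set E) (x : E), D ⊆ (B : Set E) → IsLUB D x → x ∈ B

/-- The disjoint complement of a set `D`. -/
def disjComplement {E : Type*} [AddCommGroup E] [Lattice E] (D : Set E) : Set E :=
  {x : E | ∀ y ∈ D, |x| ⊓ |y| = 0}

/-- A projection band: a band `B` with `E = B ⊕ Bᵈ`. -/
def IsProjectionBand {E : Type*} [AddCommGroup E] [Lattice E] [Module ℝ E]
    (B : Submodule ℝ E) : Prop :=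
  IsBand B ∧ ∀ x : E, ∃ y ∈ B, ∃ z ∈ disjComplement (B : Set E), x = y + z

/-- An order direct sum decomposition `E = L ⊕ M`: every element decomposes uniquely
as a sum of an element of `L` and an element of `M`, and an element is positive iff
both its components are positive. -/
def IsOrderDecomposition {E : Type*} [AddCommGroup E] [Lattice E] [Module ℝ E]
    (L M : Submodule ℝ E) : Prop :=
  (∀ x : E, ∃ y ∈ L, ∃ z ∈ M, x = y + z) ∧
  (∀ x : E, x ∈ L → x ∈ M → x = 0) ∧
  (∀ y z : E, y ∈ L → z ∈ M → (0 ≤ y + z ↔ 0 ≤ y ∧ 0 ≤ z))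

/-- A homomorphism `ρ : G →* (E ≃ₗ[ℝ] E)` is a positive representation when each
`ρ s` is an order isomorphism (hence a lattice automorphism). -/
def IsPositiveRep {E : Type*} [AddCommGroup E] [Lattice E] [Module ℝ E]
    {G : Type*} [Group G] (ρ : G →* (E ≃ₗ[ℝ] E)) : Prop :=
  ∀ (s : G) (x y : E), x ≤ y ↔ ρ s x ≤ ρ s y

/-- A submodule is `ρ`-invariant if it is mapped into itself by every `ρ s`. -/
def InvariantSubmodule {E : Type*} [AddCommGroup E] [Lattice E] [Module ℝ E]
    {G : Type*} [Group G] (ρ : G →* (E ≃ₗ[ℝ] E)) (B : Submodule ℝ E) : Prop :=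
  ∀ (s : G), ∀ x ∈ B, ρ s x ∈ B

/-- `ρ` is order indecomposable if the only `ρ`-invariant order direct sum
decompositions `E = L ⊕ M` are the trivial ones. -/
def OrderIndecomposable {E : Type*} [AddCommGroup E] [Lattice E] [Module ℝ E]
    {G : Type*} [Group G] (ρ : G →* (E ≃ₗ[ℝ] E)) : Prop :=
  ∀ L M : Submodule ℝ E, IsOrderDecomposition L M →
    InvariantSubmodule ρ L → InvariantSubmodule ρ M → L = ⊥ ∨ L = ⊤

/-- `ρ` is projection band irreducible if the only `ρ`-invariant projection bands
are `{0}` and `E`. -/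
def ProjectionBandIrreducible {E : Type*} [AddCommGroup E] [Lattice E] [Module ℝ E]
    {G : Type*} [Group G] (ρ : G →* (E ≃ₗ[ℝ] E)) : Prop :=
  ∀ B : Submodule ℝ E, IsProjectionBand B → InvariantSubmodule ρ B → B = ⊥ ∨ B = ⊤


/-- `ρ` is band irreducible if the only `ρ`-invariant bands are `{0}` and `E`. -/
def BandIrreducible {E : Type*} [AddCommGroup E] [Lattice E] [Module ℝ E]
    {G : Type*} [Group G] (ρ : G →* (E ≃ₗ[ℝ] E)) : Prop :=
  ∀ B : Submodule ℝ E, IsBand B → InvariantSubmodule ρ B → B = ⊥ ∨ B = ⊤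

/-- `E` has sufficiently many projections if every nonzero band contains a nonzero
projection band. -/
def SufficientlyManyProjections (E : Type*) [AddCommGroup E] [Lattice E] [Module ℝ E] : Prop :=
  ∀ B : Submodule ℝ E, IsBand B → B ≠ ⊥ →
    ∃ P : Submodule ℝ E, IsProjectionBand P ∧ P ≠ ⊥ ∧ P ≤ B

section Helpers

set_option linter.unusedSectionVars false

variable {E : Type*} [AddCommGroup E] [Lattice E] [Module ℝ E] [IsOrderedAddMonoid E]

theorem inf_add_le_aux {a b c : E} (ha : 0 ≤ a) (hb : 0 ≤ b) (hc : 0 ≤ c) :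
    (a + b) ⊓ c ≤ a ⊓ c + b ⊓ c := by
  have h1 : (a + b) ⊓ c - b ⊓ c ≤ a ⊓ c := by
    rw [sub_le_iff_le_add]
    rw [add_inf, inf_add, inf_add]
    refine le_inf (le_inf inf_le_left ?_) (le_inf ?_ ?_)
    · exact inf_le_right.trans (le_add_of_nonneg_right hb)
    · exact inf_le_right.trans (le_add_of_nonneg_left ha)
    · exact inf_le_right.trans (le_add_of_nonneg_left hc)
  exact sub_le_iff_le_add.mp h1

theorem dj_mono {a b c : E} (h : |a| ≤ |b|) (hb : |b| ⊓ |c| = 0) : |a| ⊓ |c| = 0 :=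
  le_antisymm (hb ▸ inf_le_inf_right _ h) (le_inf (abs_nonneg _) (abs_nonneg _))

theorem dj_add {a b c : E} (ha : |a| ⊓ |c| = 0) (hb : |b| ⊓ |c| = 0) : |a + b| ⊓ |c| = 0 := by
  refine le_antisymm ?_ (le_inf (abs_nonneg _) (abs_nonneg _))
  calc |a + b| ⊓ |c| ≤ (|a| + |b|) ⊓ |c| := inf_le_inf_right _ (abs_add_le _ _)
    _ ≤ |a| ⊓ |c| + |b| ⊓ |c| := inf_add_le_aux (abs_nonneg _) (abs_nonneg _) (abs_nonneg _)
    _ = 0 := by rw [ha, hb, add_zero]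

theorem dj_nsmul {a c : E} (ha : |a| ⊓ |c| = 0) (n : ℕ) : |n • a| ⊓ |c| = 0 := by
  induction n with
  | zero => simp [abs_nonneg]
  | succ k ih => rw [succ_nsmul]; exact dj_add ih ha

theorem dj_smul (hsmul : ∀ (c : ℝ) (x : E), 0 ≤ c → 0 ≤ x → 0 ≤ c • x)
    {a c : E} (ha : |a| ⊓ |c| = 0) (r : ℝ) : |r • a| ⊓ |c| = 0 := by
  have key : ∀ r : ℝ, 0 ≤ r → |r • a| ⊓ |c| = 0 := by
    intro r hr
    obtain ⟨n, hn⟩ := exists_nat_ge r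
    have h1 : |(n • |a|)| ⊓ |c| = 0 := dj_nsmul (by rwa [abs_abs]) n
    refine dj_mono ?_ h1
    have h2 : r • |a| ≤ n • |a| := by
      have := hsmul ((n : ℝ) - r) |a| (sub_nonneg.2 hn) (abs_nonneg _)
      rw [sub_smul, sub_nonneg, Nat.cast_smul_eq_nsmul] at this
      exact this
    refine le_trans (abs_le'.2 ⟨?_, ?_⟩) (le_abs_self _)
    · have := hsmul r (|a| - a) hr (sub_nonneg.2 (le_abs_self _))
      rw [smul_sub, sub_nonneg] at this
      exact this.trans h2
    · have := hsmul r (|a| - -a) hr (sub_nonneg.2 (neg_le_abs _))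
      rw [smul_sub, sub_nonneg, smul_neg] at this
      exact this.trans h2
  rcases le_total 0 r with h | h
  · exact key r h
  · have := key (-r) (by linarith)
    rwa [neg_smul, abs_neg] at this

/-- The disjoint complement of a set as a submodule. -/
def djSub (hsmul : ∀ (c : ℝ) (x : E), 0 ≤ c → 0 ≤ x → 0 ≤ c • x) (D : Set E) :
    Submodule ℝ E where
  carrier := disjComplement D
  zero_mem' := fun y _ => by simp [abs_nonneg]
  add_mem' := fun ha hb y hy => dj_add (ha y hy) (hb y hy)
  smul_mem' := fun r _ ha y hy => dj_smul hsmul (ha y hy) r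

theorem dj_self {a : E} (h : |a| ⊓ |a| = 0) : a = 0 := by
  rw [inf_idem] at h
  exact le_antisymm (h ▸ le_abs_self a) (neg_nonpos.1 (h ▸ neg_le_abs a))

theorem dj_le {a b : E} (h : |a| ⊓ |b| = 0) : |b| ≤ |a + b| := by
  have h1 : |b| ≤ |a + b| + |a| := by
    have := abs_add_le (a + b) (-a)
    rw [abs_neg] at this
    simpa using this
  have h2 : |b| ≤ (|a + b| + |a|) ⊓ |b| := le_inf h1 le_rfl
  have h3 := h2.trans (inf_add_le_aux (abs_nonneg _) (abs_nonneg _) (abs_nonneg _))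
  rw [h, add_zero] at h3
  exact h3.trans inf_le_left

theorem add_eq_sup_aux {a b : E} (h : a ⊓ b = 0) : a + b = a ⊔ b := by
  rw [← inf_add_sup a b, h, zero_add]

theorem dj_abs_add {a b : E} (h : |a| ⊓ |b| = 0) : |a| + |b| ≤ |a + b| := by
  rw [add_eq_sup_aux h]
  refine sup_le ?_ (dj_le h)
  rw [add_comm]
  exact dj_le (by rwa [inf_comm])

theorem dj_sup {w x : E} {D : Set E} (hD : ∀ d ∈ D, |d| ⊓ |w| = 0) (hx : IsLUB D x) :
    |x| ⊓ |w| = 0 := by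
  rcases D.eq_empty_or_nonempty with rfl | ⟨d₀, hd₀⟩
  · have hb : ∀ y, x ≤ y := fun y => hx.2 (by simp [upperBounds])
    have h1 : x = 0 := by
      refine le_antisymm (hb 0) ?_
      have := hb (x + x)
      exact le_add_iff_nonneg_left x |>.1 this
    rw [h1]; simp [abs_nonneg]
  have hp : ∀ d : E, d⁺ ≤ |d| := fun d => sup_le (le_abs_self d) (abs_nonneg d)
  have hn : ∀ d : E, d⁻ ≤ |d| := fun d => sup_le (neg_le_abs d) (abs_nonneg d)
  have e1 : |x⁺| ⊓ |w| = 0 := by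
    rw [abs_of_nonneg (posPart_nonneg x)]
    set u := x⁺ ⊓ |w| with hu
    have hu0 : 0 ≤ u := le_inf (posPart_nonneg x) (abs_nonneg _)
    have hub : x - u ∈ upperBounds D := by
      intro d hd
      have h0 : d⁺ ⊓ u = 0 := by
        refine le_antisymm ?_ (le_inf (posPart_nonneg d) hu0)
        rw [← hD d hd]
        exact inf_le_inf (hp d) inf_le_right
      have h1 : d⁺ + u ≤ x⁺ := by
        rw [add_eq_sup_aux h0]
        exact sup_le (sup_le_sup_right (hx.1 hd) 0) inf_le_left
      have h2 : x⁻ ≤ d⁻ := sup_le_sup_right (neg_le_neg (hx.1 hd)) 0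
      rw [le_sub_iff_add_le]
      calc d + u = (d⁺ + u) - d⁻ := by
            conv_lhs => rw [← posPart_sub_negPart d]
            abel
        _ ≤ x⁺ - x⁻ := sub_le_sub h1 h2
        _ = x := posPart_sub_negPart x
    have h3 := hx.2 hub
    rw [le_sub_self_iff] at h3
    exact le_antisymm h3 hu0
  have e2 : |-x⁻| ⊓ |w| = 0 := by
    refine dj_mono ?_ (hD d₀ hd₀)
    rw [abs_neg, abs_of_nonneg (negPart_nonneg x)]
    exact (sup_le_sup_right (neg_le_neg (hx.1 hd₀)) 0).trans (hn d₀)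
  have := dj_add e1 e2
  rwa [← sub_eq_add_neg, posPart_sub_negPart] at this

theorem projBand_of_decomp {Q : Submodule ℝ E}
    (h : ∀ x : E, ∃ y ∈ Q, ∃ z ∈ disjComplement (Q : Set E), x = y + z) :
    IsProjectionBand Q := by
  have key : ∀ x : E, (∀ z ∈ disjComplement (Q : Set E), |x| ⊓ |z| = 0) → x ∈ Q := by
    intro x hx
    obtain ⟨y, hy, z, hz, rfl⟩ := h x
    have h1 := hx z hz
    have h2 : |-y| ⊓ |z| = 0 := by rw [abs_neg, inf_comm]; exact hz y hy
    have h3 := dj_add h2 h1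
    rw [neg_add_cancel_left] at h3
    rw [dj_self h3, add_zero]; exact hy
  refine ⟨⟨fun x y hxy hy => key x fun z hz => ?_, fun D x hD hx => key x fun z hz => ?_⟩, h⟩
  · exact dj_mono hxy (by rw [inf_comm]; exact hz y hy)
  · exact dj_sup (fun d hd => by rw [inf_comm]; exact hz d (hD hd)) hx

theorem orderDecomp_abs_mem {L M : Submodule ℝ E} (h : IsOrderDecomposition L M) {y : E}
    (hy : y ∈ L) : |y| ∈ L := by
  obtain ⟨a, ha, b, hb, hab⟩ := h.1 |y|
  have h0 := (h.2.2 a b ha hb).1 (hab ▸ abs_nonneg y)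
  have h1 := (h.2.2 (a - y) b (L.sub_mem ha hy) hb).1 (by
    have : 0 ≤ |y| - y := sub_nonneg.2 (le_abs_self y)
    rw [hab] at this
    rwa [sub_add_eq_add_sub])
  have h2 := (h.2.2 (a + y) b (L.add_mem ha hy) hb).1 (by
    have : 0 ≤ |y| + y := by
      have := sub_nonneg.2 (neg_le_abs y)
      rwa [sub_neg_eq_add] at this
    rw [hab] at this
    rwa [add_right_comm])
  have h3 : |y| ≤ a := abs_le'.2 ⟨sub_nonneg.1 h1.1, neg_le_iff_add_nonneg.2 h2.1⟩
  have h4 : |y| = a := le_antisymm h3 (hab ▸ le_add_of_nonneg_right h0.2)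
  rwa [h4]

theorem orderDecomp_symm {L M : Submodule ℝ E} (h : IsOrderDecomposition L M) :
    IsOrderDecomposition M L := by
  refine ⟨fun x => ?_, fun x h1 h2 => h.2.1 x h2 h1, fun y z hy hz => ?_⟩
  · obtain ⟨a, ha, b, hb, hab⟩ := h.1 x
    exact ⟨b, hb, a, ha, by rw [hab, add_comm]⟩
  · rw [add_comm, h.2.2 z y hz hy, and_comm]

theorem orderDecomp_disj {L M : Submodule ℝ E} (h : IsOrderDecomposition L M) {y z : E}
    (hy : y ∈ L) (hz : z ∈ M) : |z| ⊓ |y| = 0 := by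
  have hy' := orderDecomp_abs_mem h hy
  have hz' := orderDecomp_abs_mem (orderDecomp_symm h) hz
  obtain ⟨a, ha, b, hb, hab⟩ := h.1 (|z| ⊓ |y|)
  have h0 := (h.2.2 a b ha hb).1 (hab ▸ le_inf (abs_nonneg z) (abs_nonneg y))
  have h1 := (h.2.2 (|y| - a) (-b) (L.sub_mem hy' ha) (M.neg_mem hb)).1 (by
    have : 0 ≤ |y| - (|z| ⊓ |y|) := sub_nonneg.2 inf_le_right
    rw [hab] at this
    rwa [← sub_eq_add_neg, sub_sub])
  have h2 := (h.2.2 (-a) (|z| - b) (L.neg_mem ha) (M.sub_mem hz' hb)).1 (by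
    have : 0 ≤ |z| - (|z| ⊓ |y|) := sub_nonneg.2 inf_le_left
    rw [hab] at this
    rwa [neg_add_eq_sub, sub_sub, add_comm b a])
  rw [hab, le_antisymm (neg_nonneg.1 h1.2) h0.2, le_antisymm (neg_nonneg.1 h2.1) h0.1, add_zero]

theorem projBand_orderDecomp (hsmul : ∀ (c : ℝ) (x : E), 0 ≤ c → 0 ≤ x → 0 ≤ c • x)
    {P : Submodule ℝ E} (hP : IsProjectionBand P) :
    IsOrderDecomposition P (djSub hsmul (P : Set E)) := by
  refine ⟨hP.2, fun x h1 h2 => dj_self (h2 x h1), fun y z hy hz => ⟨fun h => ?_, fun h => add_nonneg h.1 h.2⟩⟩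
  have h1 := dj_abs_add (a := y) (b := z) (by rw [inf_comm]; exact hz y hy)
  rw [abs_of_nonneg h] at h1
  constructor
  · have h2 : |y| + z ≤ y + z := (add_le_add_right (le_abs_self z) _).trans h1
    exact (abs_nonneg y).trans (le_of_add_le_add_right h2)
  · have h2 : y + |z| ≤ y + z := (add_le_add_left (le_abs_self y) _).trans h1
    exact (abs_nonneg z).trans (le_of_add_le_add_left h2)

theorem projBand_iSup (hsmul : ∀ (c : ℝ) (x : E), 0 ≤ c → 0 ≤ x → 0 ≤ c • x)
    {ι : Type*} [Finite ι] (P : ι → Submodule ℝ E)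
    (hP : ∀ i, ∀ x : E, ∃ y ∈ P i, ∃ z ∈ disjComplement (P i : Set E), x = y + z) :
    IsProjectionBand (⨆ i, P i) := by
  classical
  have := Fintype.ofFinite ι
  have key : ∀ (S : Finset ι) (x : E), ∃ y ∈ ⨆ i, P i, ∃ z,
      (∀ i ∈ S, z ∈ disjComplement (P i : Set E)) ∧ x = y + z := by
    intro S
    induction S using Finset.induction_on with
    | empty => exact fun x => ⟨0, Submodule.zero_mem _, x, by simp, by simp⟩
    | insert t S _ ih =>
      intro x
      obtain ⟨y, hy, z, hz, rfl⟩ := ih x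
      obtain ⟨a, ha, b, hb, rfl⟩ := hP t z
      refine ⟨y + a, Submodule.add_mem _ hy (Submodule.mem_iSup_of_mem t ha), b, ?_, by abel⟩
      intro i hi
      rcases Finset.mem_insert.1 hi with rfl | hi
      · exact hb
      · exact fun w hw => dj_mono (dj_le (by rw [inf_comm]; exact hb a ha)) (hz i hi w hw)
  refine projBand_of_decomp fun x => ?_
  obtain ⟨y, hy, z, hz, hx⟩ := key Finset.univ x
  refine ⟨y, hy, z, ?_, hx⟩
  have hle : (⨆ i, P i) ≤ djSub hsmul {z} := by
    refine iSup_le fun i w hw v hv => ?_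
    rw [Set.mem_singleton_iff.1 hv, inf_comm]
    exact hz i (Finset.mem_univ i) w hw
  intro w hw
  rw [inf_comm]
  exact hle hw z rfl

theorem rep_dj {G : Type*} [Group G] {ρ : G →* (E ≃ₗ[ℝ] E)} (hρ : IsPositiveRep ρ) (s : G)
    {a b : E} (h : |a| ⊓ |b| = 0) : |ρ s a| ⊓ |ρ s b| = 0 := by
  let e : E ≃o E := { (ρ s).toEquiv with map_rel_iff' := fun {x y} => (hρ s x y).symm }
  have he : ∀ x, e x = ρ s x := fun _ => rfl
  have habs : ∀ x, |ρ s x| = e |x| := by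
    intro x
    rw [abs, abs, e.map_sup, he, he, map_neg]
  rw [habs, habs, ← e.map_inf, h, he, map_zero]

theorem rep_inv_apply {G : Type*} [Group G] (ρ : G →* (E ≃ₗ[ℝ] E)) (s : G) (x : E) :
    ρ s (ρ s⁻¹ x) = x := by
  rw [← LinearEquiv.mul_apply, ← map_mul, mul_inv_cancel, map_one]; rfl

end Helpers

/-- For a positive representation of a finite group in a Riesz space with sufficiently
many projections, projection band irreducibility is equivalent to band irreducibility,
and either is equivalent to order indecomposability. -/
theorem stmt2 {G E : Type*} [Group G] [Finite G] [AddCommGroup E] [Lattice E] [Module ℝ E]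
    (hadd : ∀ x y z : E, x ≤ y → x + z ≤ y + z)
    (hsmul : ∀ (c : ℝ) (x : E), 0 ≤ c → 0 ≤ x → 0 ≤ c • x)
    (hE : SufficientlyManyProjections E)
    (ρ : G →* (E ≃ₗ[ℝ] E)) (hρ : IsPositiveRep ρ) :
    (ProjectionBandIrreducible ρ ↔ BandIrreducible ρ) ∧
    (ProjectionBandIrreducible ρ ↔ OrderIndecomposable ρ) := by
  have : IsOrderedAddMonoid E := { add_le_add_left := fun a b h c => hadd a b c h }
  refine ⟨⟨fun h B hB hinv => ?_, fun h B hB hinv => h B hB.1 hinv⟩,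
    ⟨fun h L M hLM hL hM => ?_, fun h P hP hinv => ?_⟩⟩
  · by_cases hB0 : B = ⊥
    · exact Or.inl hB0
    right
    obtain ⟨P, hP, hP0, hPB⟩ := hE B hB hB0
    let Q : G → Submodule ℝ E := fun s => P.map (ρ s).toLinearMap
    have hQ : IsProjectionBand (⨆ s, Q s) := by
      refine projBand_iSup hsmul Q fun s x => ?_
      obtain ⟨y, hy, z, hz, hx⟩ := hP.2 (ρ s⁻¹ x)
      refine ⟨ρ s y, ⟨y, hy, rfl⟩, ρ s z, ?_, ?_⟩
      · rintro _ ⟨w, hw, rfl⟩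
        exact rep_dj hρ s (hz w hw)
      · rw [← map_add, ← hx, rep_inv_apply]
    have hQinv : InvariantSubmodule ρ (⨆ s, Q s) := by
      intro t
      have : (⨆ s, Q s) ≤ (⨆ s, Q s).comap (ρ t).toLinearMap := by
        refine iSup_le fun s => ?_
        rintro _ ⟨w, hw, rfl⟩
        refine Submodule.mem_iSup_of_mem (t * s) ⟨w, hw, ?_⟩
        simp [map_mul]
      exact fun x hx => this hx
    have hPQ : P ≤ ⨆ s, Q s := fun x hx =>
      Submodule.mem_iSup_of_mem 1 ⟨x, hx, by simp⟩
    have hQB : (⨆ s, Q s) ≤ B := by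
      refine iSup_le fun s => ?_
      rintro _ ⟨w, hw, rfl⟩
      exact hinv s w (hPB hw)
    rcases h _ hQ hQinv with h1 | h1
    · exact absurd (le_bot_iff.1 (h1 ▸ hPQ)) hP0
    · exact top_le_iff.1 (h1 ▸ hQB)
  · refine h L (projBand_of_decomp fun x => ?_) hL
    obtain ⟨y, hy, z, hz, hx⟩ := hLM.1 x
    exact ⟨y, hy, z, fun w hw => orderDecomp_disj hLM hw hz, hx⟩
  · refine h P _ (projBand_orderDecomp hsmul hP) hinv fun s x hx y hy => ?_
    have := rep_dj hρ s (hx _ (hinv s⁻¹ y hy))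
    rwa [rep_inv_apply] at this
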